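/- Let d be an even positive integer and n a positive integer. Then ν₂(W_d(n)) ≥ 2·s₂(n). -/

import Mathlib

/-- `Wstar d n` is the number of Abelian squares: the sum over all tuples
`(x₁,…,x_d)` of nonnegative integers summing to `n` of the square of the
multinomial coefficient `n!/(x₁!⋯x_d!)`. -/
def Wstar (d n : ℕ) : ℕ :=
  ∑ x ∈ Finset.Nat.antidiagonalTuple d n, (Nat.multinomial Finset.univ x) ^ 2

/-- `W d n` is the number of `2n`-step closed walks at the origin in `ℤ^d`. -/
def W (d n : ℕ) : ℕ := Nat.choose (2 * n) n * Wstar d n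

/-- `s2 n` is the number of ones in the binary expansion of `n`. -/
def s2 (n : ℕ) : ℕ := (Nat.digits 2 n).sum

/-!
The generating function of `Wstar d n / n!²` is the `d`-th power of `∑ xⁿ / n!²`, so `Wstar (d + e)`
is a convolution of `Wstar d` and `Wstar e` with weights `(n choose k)²`. Since `Wstar 2 n` is the
central binomial coefficient, of 2-adic valuation exactly `s₂(n)`, and since `s₂` is subadditive,
convolving with `Wstar 2` preserves divisibility of the `n`-th term by `2 ^ s₂(n)`. The factor
`(2n choose n)` of `W d n` contributes a further `s₂(n)`.
-/

open Finset PowerSeries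
open scoped Nat

theorem sum_digits_add_le (p : ℕ) [hp : Fact p.Prime] (m n : ℕ) :
    (p.digits (m + n)).sum ≤ (p.digits m).sum + (p.digits n).sum := by
  have legendre := sub_one_mul_padicValNat_factorial (p := p)
  have val_le : padicValNat p m ! + padicValNat p n ! ≤ padicValNat p (m + n)! := by
    rw [← padicValNat.mul m.factorial_ne_zero n.factorial_ne_zero]
    exact padicValNat_dvd_iff_le (m + n).factorial_ne_zero |>.mp
      (pow_padicValNat_dvd.trans (Nat.factorial_mul_factorial_dvd_factorial_add m n))
  have scaled := Nat.mul_le_mul_left (p - 1) val_le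
  rw [mul_add, legendre, legendre, legendre] at scaled
  have := p.digit_sum_le m
  have := p.digit_sum_le n
  have := p.digit_sum_le (m + n)
  lia

theorem s2_add_le (m n : ℕ) : s2 (m + n) ≤ s2 m + s2 n :=
  sum_digits_add_le 2 m n

theorem s2_two_mul (n : ℕ) : s2 (2 * n) = s2 n := by
  rcases n.eq_zero_or_pos with rfl | hn
  · rfl
  · simp [s2, Nat.digits_base_mul one_lt_two hn]

theorem padicValNat_two_centralBinom (n : ℕ) : padicValNat 2 n.centralBinom = s2 n := by
  have kummer : padicValNat 2 ((n + n).choose n) = s2 n + s2 n - s2 (n + n) := by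
    simpa using! sub_one_mul_padicValNat_choose_eq_sub_sum_digits' (p := 2) (k := n) (n := n)
  rwa [← two_mul n, s2_two_mul, Nat.add_sub_cancel] at kummer

theorem cast_multinomial {ι K : Type*} [Semifield K] [CharZero K] (s : Finset ι) (f : ι → ℕ) :
    (Nat.multinomial s f : K) = (∑ i ∈ s, f i)! / ∏ i ∈ s, ((f i)! : K) := by
  rw [eq_div_iff (prod_ne_zero_iff.mpr fun i _ ↦ Nat.cast_ne_zero.mpr (f i).factorial_ne_zero),
    mul_comm]
  exact_mod_cast Nat.multinomial_spec s f

theorem coeff_pow_eq_sum_antidiagonalTuple {R : Type*} [CommSemiring R] (f : R⟦X⟧) (d n : ℕ) :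
    coeff n (f ^ d) = ∑ x ∈ Nat.antidiagonalTuple d n, ∏ i, coeff (x i) f := by
  rw [← Fin.prod_const, coeff_prod]
  refine sum_equiv Finsupp.equivFunOnFinite (fun x ↦ ?_) fun x _ ↦ rfl
  simp [Nat.mem_antidiagonalTuple]

/-- The power series `∑ xⁿ / n!²`, that is, the modified Bessel function `I₀(2√x)`. Its `d`-th power
is the generating function of `Wstar d n / n!²`. -/
def besselSeries : ℚ⟦X⟧ := PowerSeries.mk fun n ↦ 1 / (n ! : ℚ) ^ 2

theorem coeff_besselSeries_pow (d n : ℕ) :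
    coeff n (besselSeries ^ d) = Wstar d n / (n ! : ℚ) ^ 2 := by
  rw [coeff_pow_eq_sum_antidiagonalTuple, Wstar, Nat.cast_sum, sum_div]
  refine sum_congr rfl fun x hx ↦ ?_
  have hfact : (n ! : ℚ) ≠ 0 := Nat.cast_ne_zero.mpr n.factorial_ne_zero
  simp only [besselSeries, coeff_mk, prod_div_distrib, prod_const_one, prod_pow, Nat.cast_pow,
    cast_multinomial, Nat.mem_antidiagonalTuple.mp hx]
  field_simp

theorem Wstar_add (d e n : ℕ) :
    Wstar (d + e) n = ∑ p ∈ antidiagonal n, n.choose p.1 ^ 2 * (Wstar d p.1 * Wstar e p.2) := by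
  have hfact (k : ℕ) : (k ! : ℚ) ≠ 0 := Nat.cast_ne_zero.mpr k.factorial_ne_zero
  have hcoeff := congrArg (coeff n) (pow_add besselSeries d e)
  simp only [coeff_mul, coeff_besselSeries_pow] at hcoeff
  rw [div_eq_iff (pow_ne_zero 2 (hfact n)), sum_mul] at hcoeff
  rw [← Nat.cast_inj (R := ℚ), hcoeff, Nat.cast_sum]
  refine sum_congr rfl fun ⟨k, l⟩ hkl ↦ ?_
  obtain rfl : k + l = n := mem_antidiagonal.mp hkl
  have := hfact k
  have := hfact l
  push_cast [Nat.cast_add_choose]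
  field_simp

theorem Wstar_one (n : ℕ) : Wstar 1 n = 1 := by
  simp [Wstar]

theorem Wstar_two (n : ℕ) : Wstar 2 n = n.centralBinom := by
  rw [Wstar_add 1 1, Nat.centralBinom, ← Nat.sum_range_choose_sq,
    Nat.sum_antidiagonal_eq_sum_range_succ_mk]
  simp only [Wstar_one, mul_one]

theorem Wstar_pos {d : ℕ} (hd : 0 < d) (n : ℕ) : 0 < Wstar d n := by
  refine sum_pos (fun x _ ↦ pow_pos (Nat.multinomial_pos univ x) 2) ⟨Pi.single ⟨0, hd⟩ n, ?_⟩
  simp [Nat.mem_antidiagonalTuple]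

theorem two_pow_s2_dvd_Wstar {d : ℕ} (hd : Even d) (n : ℕ) : 2 ^ s2 n ∣ Wstar d n := by
  rw [even_iff_exists_two_mul] at hd
  obtain ⟨r, rfl⟩ := hd
  induction r generalizing n with
  | zero =>
    cases n with
    | zero => simp [s2]
    | succ n => simp [Wstar]
  | succ r ih =>
    rw [mul_add_one, Wstar_add]
    refine dvd_sum fun ⟨k, l⟩ hkl ↦ dvd_mul_of_dvd_right ?_ _
    obtain rfl : k + l = n := mem_antidiagonal.mp hkl
    have hcentral : 2 ^ s2 l ∣ Wstar 2 l := by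
      rw [Wstar_two, ← padicValNat_two_centralBinom]
      exact pow_padicValNat_dvd
    calc 2 ^ s2 (k + l) ∣ 2 ^ (s2 k + s2 l) := pow_dvd_pow 2 (s2_add_le k l)
      _ = 2 ^ s2 k * 2 ^ s2 l := pow_add ..
      _ ∣ Wstar (2 * r) k * Wstar 2 l := mul_dvd_mul (ih k) hcentral

theorem stmt_6 (d n : ℕ) (hd : 0 < d) (heven : Even d) (hn : 0 < n) :
    2 * s2 n ≤ padicValNat 2 (W d n) := by
  have hWstar : Wstar d n ≠ 0 := (Wstar_pos hd n).ne'
  calc 2 * s2 n = s2 n + s2 n := two_mul _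
    _ ≤ padicValNat 2 n.centralBinom + padicValNat 2 (Wstar d n) :=
      add_le_add (padicValNat_two_centralBinom n).ge
        ((padicValNat_dvd_iff_le hWstar).mp (two_pow_s2_dvd_Wstar heven n))
    _ = padicValNat 2 (W d n) := (padicValNat.mul n.centralBinom_ne_zero hWstar).symm
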